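/- For every ε ∈ (0, 1/16) there exists a constant C₀ such that the following holds. If p = C n^{-1/2} for some constant C ≥ C₀, then G(n,p) asymptotically almost surely satisfies: every subgraph G' of G(n,p) with more than (1/2 + ε)·n²p/2 edges contains a vertex w such that the number of edges of G' spanned by the second neighborhood N^{(2)}_{G'}(w) is at least (ε/16)·n²p. -/

import Mathlib

/-!
Write `d` for the degrees in `G'`. For a vertex `y` put
`excess y = ∑ x ∼ y, d x - p n d y + (d y)²`. Summing over `y` gives `2 ∑ d² - p n ∑ d`, which by
Cauchy–Schwarz is at least `ε p² n³` when `∑ d > (1/2 + ε) n² p` (`sum_excess_ge`). As the excess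
of `y` is at most `4 p n d y`, some vertex `w` has at least `(ε/8) p n` neighbors of excess at
least `(ε/2) p² n²` (`exists_vertex_many`). By pigeonhole a constant proportion of them, a set
`Y`, have degrees in a common window of length `p n / L` (`exists_degree_class`).

The joint neighborhood `S` of `Y` spans many edges (`pairCount_nbhd_ge`). Let
`g x = |N(x) ∩ Y| / (p |Y|)` and `h = min g 1`. The host graph sends at most
`p |Y| |A| + δ p |Y| n` edges from `Y` to any set `A`, so `g` and `h` differ by at most `δ n` in
total. As `h` is supported on `S`, the number of ordered adjacent pairs in `S` is at least
`∑ h d` minus the `h`-weighted number of edges leaving `S`. Up to small errors, the first term is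
`∑ g d`, which the excess bounds from below, and the second is at most `p γ (n - γ)` with
`γ = ∑ g`; the difference is about `(ε/2) p n²`. All of `S` except `w` and its `O(p n)` neighbors
lies in the second neighborhood of `w`, and the excluded vertices meet only `O(p² n²) = o(p n²)`
edges (`exists_special_of_regular`).

The two properties of the host graph (`UpperRegular`) are upper-tail estimates: a Chernoff bound
(`gnpProb_pairCount_le`) and a union bound over `4 ^ n` pairs of sets, which succeeds because
`|Y|` is of order `p n` and the exponent is of order `(p n)² = C² n` with `C` large.
-/

open Filter Topology Classical

/-- Probability that a graph drawn from the binomial random graph G(n,p) (each pair of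
vertices forming an edge independently with probability p) satisfies the predicate P. -/
noncomputable def gnpProb (V : Type) [Fintype V] [DecidableEq V] (p : ℝ)
    (P : SimpleGraph V → Prop) : ℝ :=
  ∑ G : SimpleGraph V,
    if P G then p ^ G.edgeSet.ncard *
      (1 - p) ^ ((Fintype.card V).choose 2 - G.edgeSet.ncard) else 0

/-- The neighborhood of a vertex set: all vertices adjacent to at least one vertex of X. -/
def setNbhd {V : Type} (G : SimpleGraph V) (X : Finset V) : Set V :=
  {u | ∃ v ∈ X, G.Adj v u}

/-- The total degree of a vertex set. -/
noncomputable def totalDeg {V : Type} (G : SimpleGraph V) (X : Finset V) : ℝ :=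
  ∑ v ∈ X, ((G.neighborSet v).ncard : ℝ)

/-- The set of vertices at distance exactly 2 from `w` in `G`. -/
def secondNbhd {V : Type} (G : SimpleGraph V) (w : V) : Set V :=
  {u | G.dist w u = 2}

/-- The number of edges of `G` spanned by the vertex set `S`. -/
noncomputable def edgesInside {V : Type} (G : SimpleGraph V) (S : Set V) : ℕ :=
  {e ∈ G.edgeSet | ∀ v ∈ e, v ∈ S}.ncard

/-! ### Elementary properties of the binomial model -/

/-- The weight of a graph in the binomial model. -/
noncomputable def gnpWeight (V : Type) [Fintype V] [DecidableEq V] (p : ℝ)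
    (G : SimpleGraph V) : ℝ :=
  p ^ G.edgeSet.ncard * (1 - p) ^ ((Fintype.card V).choose 2 - G.edgeSet.ncard)

/-- Expansion of a product over all pairs as a sum over graphs: the expectation of a
multiplicative functional of the edges. -/
lemma gnp_mgf (V : Type) [Fintype V] [DecidableEq V] (p : ℝ) (f : Sym2 V → ℝ) :
    ∑ G : SimpleGraph V, gnpWeight V p G * ∏ e ∈ G.edgeFinset, f e =
      ∏ e ∈ (⊤ : SimpleGraph V).edgeFinset, (p * f e + (1 - p)) := by
  rw [Finset.prod_add]
  refine Finset.sum_bij' (fun G _ => G.edgeFinset)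
    (fun t _ => SimpleGraph.fromEdgeSet (t : Set (Sym2 V))) ?_ ?_ ?_ ?_ ?_
  · intro G _
    rw [Finset.mem_powerset]
    exact SimpleGraph.edgeFinset_mono le_top
  · intro t _
    exact Finset.mem_univ _
  · intro G _
    simp
  · intro t ht
    rw [Finset.mem_powerset] at ht
    ext e
    simp only [SimpleGraph.mem_edgeFinset, SimpleGraph.edgeSet_fromEdgeSet, Set.mem_sdiff,
      Finset.mem_coe]
    constructor
    · exact fun h => h.1
    · intro h
      refine ⟨h, ?_⟩
      have := ht h
      simpa using this
  · intro G _
    have hsub : G.edgeFinset ⊆ (⊤ : SimpleGraph V).edgeFinset :=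
      SimpleGraph.edgeFinset_mono le_top
    rw [Finset.prod_mul_distrib, Finset.prod_const, Finset.prod_const,
      Finset.card_sdiff_of_subset hsub, SimpleGraph.card_edgeFinset_top_eq_card_choose_two,
      gnpWeight, Set.ncard_eq_toFinset_card']
    simp only [SimpleGraph.edgeFinset]
    ring

lemma gnpWeight_nonneg (V : Type) [Fintype V] [DecidableEq V] {p : ℝ} (h0 : 0 ≤ p) (h1 : p ≤ 1)
    (G : SimpleGraph V) : 0 ≤ gnpWeight V p G :=
  mul_nonneg (pow_nonneg h0 _) (pow_nonneg (sub_nonneg.2 h1) _)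

lemma sum_gnpWeight (V : Type) [Fintype V] [DecidableEq V] (p : ℝ) :
    ∑ G : SimpleGraph V, gnpWeight V p G = 1 := by
  have := gnp_mgf V p (fun _ => 1)
  simpa using this

lemma gnpProb_eq (V : Type) [Fintype V] [DecidableEq V] (p : ℝ) (P : SimpleGraph V → Prop) :
    gnpProb V p P = ∑ G : SimpleGraph V, if P G then gnpWeight V p G else 0 := rfl

lemma gnpProb_add_not (V : Type) [Fintype V] [DecidableEq V] (p : ℝ)
    (P : SimpleGraph V → Prop) :
    gnpProb V p P + gnpProb V p (fun G => ¬ P G) = 1 := by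
  rw [gnpProb_eq, gnpProb_eq, ← Finset.sum_add_distrib, ← sum_gnpWeight V p]
  refine Finset.sum_congr rfl fun G _ => ?_
  by_cases h : P G <;> simp [h]

lemma gnpProb_nonneg (V : Type) [Fintype V] [DecidableEq V] {p : ℝ} (h0 : 0 ≤ p) (h1 : p ≤ 1)
    (P : SimpleGraph V → Prop) : 0 ≤ gnpProb V p P := by
  rw [gnpProb_eq]
  refine Finset.sum_nonneg fun G _ => ?_
  split_ifs
  · exact gnpWeight_nonneg V h0 h1 G
  · exact le_rfl

lemma gnpProb_mono (V : Type) [Fintype V] [DecidableEq V] {p : ℝ} (h0 : 0 ≤ p) (h1 : p ≤ 1)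
    {P Q : SimpleGraph V → Prop} (h : ∀ G, P G → Q G) : gnpProb V p P ≤ gnpProb V p Q := by
  rw [gnpProb_eq, gnpProb_eq]
  refine Finset.sum_le_sum fun G _ => ?_
  have := gnpWeight_nonneg V h0 h1 G
  by_cases hP : P G
  · simp [hP, h G hP]
  · simp only [hP, if_false]
    split_ifs <;> simp [this]

lemma gnpProb_or_le (V : Type) [Fintype V] [DecidableEq V] {p : ℝ} (h0 : 0 ≤ p) (h1 : p ≤ 1)
    (P Q : SimpleGraph V → Prop) :
    gnpProb V p (fun G => P G ∨ Q G) ≤ gnpProb V p P + gnpProb V p Q := by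
  rw [gnpProb_eq, gnpProb_eq, gnpProb_eq, ← Finset.sum_add_distrib]
  refine Finset.sum_le_sum fun G _ => ?_
  have := gnpWeight_nonneg V h0 h1 G
  by_cases hP : P G <;> by_cases hQ : Q G <;> simp [hP, hQ, this]

lemma gnpProb_exists_le (V : Type) [Fintype V] [DecidableEq V] {p : ℝ} (h0 : 0 ≤ p) (h1 : p ≤ 1)
    {ι : Type} (s : Finset ι) (P : ι → SimpleGraph V → Prop) :
    gnpProb V p (fun G => ∃ i ∈ s, P i G) ≤ ∑ i ∈ s, gnpProb V p (P i) := by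
  simp only [gnpProb_eq]
  rw [Finset.sum_comm]
  refine Finset.sum_le_sum fun G _ => ?_
  have hw := gnpWeight_nonneg V h0 h1 G
  have hterm : ∀ i ∈ s, 0 ≤ (if P i G then gnpWeight V p G else 0) := by
    intro i _
    split_ifs <;> simp [hw]
  split_ifs with h
  · obtain ⟨i, hi, hP⟩ := h
    have := Finset.single_le_sum hterm hi
    simpa [hP] using this
  · exact Finset.sum_nonneg hterm

/-! ### Edge counts between two sets and their upper tail -/

/-- The real-valued indicator of adjacency. -/
noncomputable def adjInd {V : Type} (G : SimpleGraph V) (x y : V) : ℝ :=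
  if G.Adj x y then 1 else 0

/-- The number of ordered pairs `(y, a) ∈ Y × A` with `y` adjacent to `a`, as a real number;
an edge inside `Y ∩ A` is counted twice. -/
noncomputable def pairCount {V : Type} (G : SimpleGraph V) (Y A : Finset V) : ℝ :=
  ∑ y ∈ Y, ∑ a ∈ A, adjInd G y a

/-- The multiplicity (0, 1 or 2) with which an unordered pair is counted in `pairCount`. -/
noncomputable def pairMult {V : Type} (Y A : Finset V) (e : Sym2 V) : ℕ :=
  ((Y ×ˢ A).filter fun q => s(q.1, q.2) = e).card

lemma pairMult_le_two {V : Type} (Y A : Finset V) (e : Sym2 V) : pairMult Y A e ≤ 2 := by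
  induction e with
  | _ a b =>
    have : ((Y ×ˢ A).filter fun q => s(q.1, q.2) = s(a, b)) ⊆ {(a, b), (b, a)} := by
      intro q hq
      have := (Finset.mem_filter.1 hq).2
      rw [Sym2.eq_iff] at this
      simp only [Finset.mem_insert, Finset.mem_singleton, Prod.ext_iff]
      exact this
    exact (Finset.card_le_card this).trans Finset.card_le_two

lemma pairCount_eq_sum_mult {V : Type} [Fintype V] [DecidableEq V] (G : SimpleGraph V)
    (Y A : Finset V) :
    pairCount G Y A = ∑ e ∈ G.edgeFinset, (pairMult Y A e : ℝ) := by
  have h1 : pairCount G Y A = (((Y ×ˢ A).filter fun q => G.Adj q.1 q.2).card : ℝ) := by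
    rw [pairCount, ← Finset.sum_product']
    simp [adjInd]
  rw [h1, Finset.card_eq_sum_card_fiberwise (f := fun q => s(q.1, q.2)) (t := G.edgeFinset)]
  · push_cast
    refine Finset.sum_congr rfl fun e he => ?_
    congr 1
    rw [pairMult, Finset.filter_filter]
    congr 1
    ext q
    simp only [Finset.mem_filter]
    constructor
    · rintro ⟨h, _, h'⟩
      exact ⟨h, h'⟩
    · rintro ⟨h, h'⟩
      refine ⟨h, ?_, h'⟩
      rw [SimpleGraph.mem_edgeFinset, ← h'] at he
      exact he
  · intro q hq
    have := (Finset.mem_filter.1 hq).2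
    simpa using this

lemma sum_pairMult_le {V : Type} (Y A : Finset V) (s : Finset (Sym2 V)) :
    ∑ e ∈ s, (pairMult Y A e : ℝ) ≤ (Y.card : ℝ) * A.card := by
  have : ∑ e ∈ s, pairMult Y A e ≤ (Y ×ˢ A).card := by
    simp only [pairMult]
    rw [← Finset.card_biUnion]
    · exact Finset.card_le_card (Finset.biUnion_subset.2 fun e _ => Finset.filter_subset _ _)
    · intro e _ e' _ hne
      rw [Function.onFun, Finset.disjoint_left]
      intro q hq hq'
      exact hne ((Finset.mem_filter.1 hq).2.symm.trans (Finset.mem_filter.1 hq').2)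
  rw [Finset.card_product] at this
  exact_mod_cast this

/-- Chernoff's bound, with the exponential-moment parameter `θ` left free. -/
lemma gnpProb_pairCount_le (V : Type) [Fintype V] [DecidableEq V] {p θ : ℝ} (h0 : 0 ≤ p)
    (h1 : p ≤ 1) (hθ0 : 0 ≤ θ) (hθ1 : θ ≤ 1 / 2) (Y A : Finset V) (t : ℝ) :
    gnpProb V p (fun G => p * (Y.card * A.card) + t < pairCount G Y A) ≤
      Real.exp (2 * p * θ ^ 2 * (Y.card * A.card) - θ * t) := by
  have hexp : ∀ G : SimpleGraph V, Real.exp (θ * pairCount G Y A) =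
      ∏ e ∈ G.edgeFinset, Real.exp (θ * pairMult Y A e) := by
    intro G
    rw [← Real.exp_sum, ← Finset.mul_sum, pairCount_eq_sum_mult]
  have hmgf : ∑ G : SimpleGraph V, gnpWeight V p G * Real.exp (θ * pairCount G Y A) ≤
      Real.exp (p * (θ * (1 + 2 * θ)) * (Y.card * A.card)) := by
    simp only [hexp]
    rw [gnp_mgf V p (fun e => Real.exp (θ * pairMult Y A e))]
    calc ∏ e ∈ (⊤ : SimpleGraph V).edgeFinset, (p * Real.exp (θ * pairMult Y A e) + (1 - p))
        ≤ ∏ e ∈ (⊤ : SimpleGraph V).edgeFinset,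
            Real.exp (p * (θ * (1 + 2 * θ)) * pairMult Y A e) := by
          refine Finset.prod_le_prod (fun e _ => ?_) fun e _ => ?_
          · have := Real.exp_pos (θ * pairMult Y A e)
            have := mul_nonneg h0 this.le
            linarith
          · have hm0 : (0 : ℝ) ≤ pairMult Y A e := Nat.cast_nonneg _
            have hm2 : (pairMult Y A e : ℝ) ≤ 2 := by exact_mod_cast pairMult_le_two Y A e
            have hx0 : 0 ≤ θ * pairMult Y A e := mul_nonneg hθ0 hm0
            have hx1 : θ * pairMult Y A e ≤ 1 := by nlinarith
            -- `exp x ≤ 1 + x + x ^ 2` for `|x| ≤ 1`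
            have hb := Real.abs_exp_sub_one_sub_id_le (x := θ * pairMult Y A e)
              (by rw [abs_of_nonneg hx0]; exact hx1)
            have hb' := (abs_le.1 hb).2
            have hq : Real.exp (θ * pairMult Y A e) - 1 ≤
                θ * (1 + 2 * θ) * pairMult Y A e := by
              have : (θ * pairMult Y A e) ^ 2 ≤ 2 * θ ^ 2 * pairMult Y A e := by
                have h3 : 0 ≤ θ ^ 2 * pairMult Y A e := by positivity
                nlinarith
              nlinarith
            have hr := Real.add_one_le_exp (p * (θ * (1 + 2 * θ)) * pairMult Y A e)
            have := mul_le_mul_of_nonneg_left hq h0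
            nlinarith
      _ = Real.exp (p * (θ * (1 + 2 * θ)) *
            ∑ e ∈ (⊤ : SimpleGraph V).edgeFinset, (pairMult Y A e : ℝ)) := by
          rw [← Real.exp_sum, ← Finset.mul_sum]
      _ ≤ _ := by
          rw [Real.exp_le_exp]
          exact mul_le_mul_of_nonneg_left (sum_pairMult_le Y A _) (by positivity)
  -- Markov's inequality for the exponential moment
  have hmarkov : gnpProb V p (fun G => p * (Y.card * A.card) + t < pairCount G Y A) ≤
      ∑ G : SimpleGraph V, gnpWeight V p G * Real.exp (θ * pairCount G Y A) *
        Real.exp (-(θ * (p * (Y.card * A.card) + t))) := by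
    rw [gnpProb_eq]
    refine Finset.sum_le_sum fun G _ => ?_
    have hw := gnpWeight_nonneg V h0 h1 G
    split_ifs with h
    · rw [mul_assoc, ← Real.exp_add]
      refine le_mul_of_one_le_right hw (Real.one_le_exp ?_)
      have := mul_le_mul_of_nonneg_left h.le hθ0
      linarith
    · positivity
  rw [← Finset.sum_mul] at hmarkov
  refine hmarkov.trans ((mul_le_mul_of_nonneg_right hmgf (Real.exp_pos _).le).trans ?_)
  rw [← Real.exp_add, Real.exp_le_exp]
  apply le_of_eq
  ring

/-! ### Degrees and counts of ordered adjacent pairs -/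

/-- The degree of a vertex as a real number. -/
noncomputable def rdeg {V : Type} [Fintype V] (G : SimpleGraph V) (x : V) : ℝ :=
  ∑ y, adjInd G x y

lemma adjInd_nonneg {V : Type} (G : SimpleGraph V) (x y : V) : 0 ≤ adjInd G x y := by
  unfold adjInd
  split_ifs <;> norm_num

lemma adjInd_comm {V : Type} (G : SimpleGraph V) (x y : V) : adjInd G x y = adjInd G y x := by
  simp [adjInd, G.adj_comm]

lemma adjInd_mono {V : Type} {G' G : SimpleGraph V} (h : G' ≤ G) (x y : V) :
    adjInd G' x y ≤ adjInd G x y := by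
  unfold adjInd
  by_cases h' : G'.Adj x y
  · simp [h', h h']
  · simp only [h', if_false]
    split_ifs <;> norm_num

lemma rdeg_nonneg {V : Type} [Fintype V] (G : SimpleGraph V) (x : V) : 0 ≤ rdeg G x :=
  Finset.sum_nonneg fun _ _ => adjInd_nonneg _ _ _

lemma rdeg_mono {V : Type} [Fintype V] {G' G : SimpleGraph V} (h : G' ≤ G) (x : V) :
    rdeg G' x ≤ rdeg G x :=
  Finset.sum_le_sum fun _ _ => adjInd_mono h _ _

lemma sum_adjInd_le_rdeg {V : Type} [Fintype V] (G : SimpleGraph V) (x : V) (A : Finset V) :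
    ∑ y ∈ A, adjInd G x y ≤ rdeg G x :=
  Finset.sum_le_sum_of_subset_of_nonneg (Finset.subset_univ A)
    fun _ _ _ => adjInd_nonneg _ _ _

lemma pairCount_comm {V : Type} (G : SimpleGraph V) (A B : Finset V) :
    pairCount G A B = pairCount G B A := by
  unfold pairCount
  rw [Finset.sum_comm]
  simp only [adjInd_comm]

lemma pairCount_le_mul {V : Type} [Fintype V] (G : SimpleGraph V) (A B : Finset V) {M : ℝ}
    (hM : ∀ x, rdeg G x ≤ M) : pairCount G A B ≤ A.card * M := by
  unfold pairCount
  calc ∑ y ∈ A, ∑ a ∈ B, adjInd G y a ≤ ∑ y ∈ A, M :=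
        Finset.sum_le_sum fun y _ => (sum_adjInd_le_rdeg G y B).trans (hM y)
    _ = A.card * M := by simp

lemma sum_rdeg_eq {V : Type} [Fintype V] [DecidableEq V] (G : SimpleGraph V) :
    ∑ x, rdeg G x = 2 * (G.edgeSet.ncard : ℝ) := by
  have h := G.sum_degrees_eq_twice_card_edges
  have h2 : ∀ x, rdeg G x = (G.degree x : ℝ) := by
    intro x
    rw [← SimpleGraph.card_neighborFinset_eq_degree, SimpleGraph.neighborFinset_eq_filter]
    simp [rdeg, adjInd]
  have h3 : G.edgeSet.ncard = G.edgeFinset.card := by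
    rw [Set.ncard_eq_toFinset_card']
    rfl
  simp only [h2, h3]
  exact_mod_cast h

lemma pairMult_eq_zero {V : Type} (S : Finset V) (Z : Set V) (hSZ : (S : Set V) ⊆ Z)
    (e : Sym2 V) (h : ¬ ∀ v ∈ e, v ∈ Z) : pairMult S S e = 0 := by
  rw [pairMult, Finset.card_eq_zero]
  refine Finset.eq_empty_of_forall_notMem fun q hq => h ?_
  obtain ⟨hqS, rfl⟩ := Finset.mem_filter.1 hq
  rw [Finset.mem_product] at hqS
  intro v hv
  rcases Sym2.mem_iff.1 hv with rfl | rfl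
  · exact hSZ hqS.1
  · exact hSZ hqS.2

lemma pairCount_self_le {V : Type} [Fintype V] [DecidableEq V] (G : SimpleGraph V)
    (S : Finset V) (Z : Set V) (hSZ : (S : Set V) ⊆ Z) :
    pairCount G S S ≤ 2 * (edgesInside G Z : ℝ) := by
  rw [pairCount_eq_sum_mult]
  have h1 : ∑ e ∈ G.edgeFinset, (pairMult S S e : ℝ) ≤
      ∑ e ∈ G.edgeFinset, (if ∀ v ∈ e, v ∈ Z then (2 : ℝ) else 0) := by
    refine Finset.sum_le_sum fun e _ => ?_
    split_ifs with h
    · exact_mod_cast pairMult_le_two S S e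
    · simp [pairMult_eq_zero S Z hSZ e h]
  refine h1.trans (le_of_eq ?_)
  rw [← Finset.sum_filter, Finset.sum_const, nsmul_eq_mul, mul_comm]
  congr 2
  rw [edgesInside, ← Set.ncard_coe_finset]
  congr 1
  ext e
  simp

lemma pairCount_sdiff {V : Type} [Fintype V] [DecidableEq V] (G : SimpleGraph V)
    (S R : Finset V) {M : ℝ} (hM : ∀ x, rdeg G x ≤ M) :
    pairCount G S S ≤ pairCount G (S \ R) (S \ R) + 2 * (R.card * M) := by
  have hsplit : ∀ f : V → ℝ, (∀ x, 0 ≤ f x) → ∑ x ∈ S, f x ≤ ∑ x ∈ S \ R, f x + ∑ x ∈ R, f x := by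
    intro f hf
    rw [← Finset.sum_union Finset.sdiff_disjoint]
    refine Finset.sum_le_sum_of_subset_of_nonneg ?_ fun x _ _ => hf x
    intro x hx
    by_cases h : x ∈ R <;> simp [hx, h]
  have h1 : pairCount G S S ≤ pairCount G (S \ R) S + pairCount G R S :=
    hsplit (fun x => ∑ a ∈ S, adjInd G x a)
      fun x => Finset.sum_nonneg fun _ _ => adjInd_nonneg _ _ _
  have h2 : pairCount G (S \ R) S ≤ pairCount G (S \ R) (S \ R) + pairCount G R (S \ R) := by
    rw [pairCount_comm G (S \ R) S]
    exact hsplit (fun x => ∑ a ∈ S \ R, adjInd G x a)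
      fun x => Finset.sum_nonneg fun _ _ => adjInd_nonneg _ _ _
  have h3 := pairCount_le_mul G R S hM
  have h4 := pairCount_le_mul G R (S \ R) hM
  linarith

lemma dist_eq_two {V : Type} {G : SimpleGraph V} {w y x : V} (h1 : G.Adj w y) (h2 : G.Adj y x)
    (hne : x ≠ w) (hna : ¬ G.Adj w x) : G.dist w x = 2 := by
  have hle : G.dist w x ≤ 2 := by
    have := SimpleGraph.dist_le (SimpleGraph.Walk.cons h1 (SimpleGraph.Walk.cons h2 .nil))
    simpa using this
  have hr : G.Reachable w x := h1.reachable.trans h2.reachable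
  have h0 : G.dist w x ≠ 0 := by
    intro h
    exact hne (hr.dist_eq_zero_iff.1 h).symm
  have h1' : G.dist w x ≠ 1 := by
    intro h
    exact hna (SimpleGraph.dist_eq_one_iff_adj.1 h)
  omega

/-! ### Upper regularity and vertices of large excess -/

/-- Pseudorandomness of the host graph: degrees are at most twice the expected value, and no
set `Y` of size at least `β * p * n` has many more edges than expected to any other set. -/
def UpperRegular {V : Type} [Fintype V] (p δ β : ℝ) (G : SimpleGraph V) : Prop :=
  (∀ x, rdeg G x ≤ 2 * p * Fintype.card V) ∧
  ∀ Y A : Finset V, β * p * Fintype.card V ≤ Y.card →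
    pairCount G Y A ≤ p * (Y.card * A.card) + δ * p * Y.card * Fintype.card V

/-- The excess at `y`. For a set `Y` of vertices like `y`, inside which degrees are nearly
constant, `excess / p` is up to an error term a lower bound for twice the number of edges
spanned by the joint neighborhood of `Y`. -/
noncomputable def excess {V : Type} [Fintype V] (G : SimpleGraph V) (p : ℝ) (y : V) : ℝ :=
  (∑ x, adjInd G y x * rdeg G x) - p * Fintype.card V * rdeg G y + rdeg G y ^ 2

lemma sum_adj_mul_rdeg {V : Type} [Fintype V] (G : SimpleGraph V) :
    ∑ y, ∑ x, adjInd G y x * rdeg G x = ∑ x, rdeg G x ^ 2 := by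
  rw [Finset.sum_comm]
  refine Finset.sum_congr rfl fun x _ => ?_
  rw [← Finset.sum_mul, pow_two]
  congr 1
  exact Finset.sum_congr rfl fun y _ => adjInd_comm _ _ _

/-- By Cauchy–Schwarz for the degrees, the total excess is large. -/
lemma sum_excess_ge {V : Type} [Fintype V] [Nonempty V] (G : SimpleGraph V) {p ε : ℝ}
    (hp : 0 < p) (hε : 0 < ε)
    (he : (1 / 2 + ε) * ((Fintype.card V : ℝ) ^ 2 * p) < ∑ x, rdeg G x) :
    ε * p ^ 2 * (Fintype.card V : ℝ) ^ 3 ≤ ∑ y, excess G p y := by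
  have hn : (0 : ℝ) < Fintype.card V := by exact_mod_cast Fintype.card_pos
  set n : ℝ := (Fintype.card V : ℝ) with hn_def
  set s : ℝ := ∑ x, rdeg G x with hs
  have h1 : ∑ y, excess G p y = 2 * ∑ x, rdeg G x ^ 2 - p * n * s := by
    simp only [excess, Finset.sum_add_distrib, Finset.sum_sub_distrib, sum_adj_mul_rdeg,
      ← Finset.mul_sum]
    ring
  have hcs : s ^ 2 ≤ n * ∑ x, rdeg G x ^ 2 := by
    have := sq_sum_le_card_mul_sum_sq (s := (Finset.univ : Finset V)) (f := fun x => rdeg G x)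
    simpa [hs, hn_def] using this
  rw [h1]
  have h2 : ε * (n ^ 2 * p) ≤ s - 1 / 2 * (n ^ 2 * p) := by linarith
  have h3 : 1 / 2 * (n ^ 2 * p) ≤ s := by nlinarith [mul_pos hε (mul_pos (pow_pos hn 2) hp)]
  have h4 : (1 / 2 * (n ^ 2 * p)) * (ε * (n ^ 2 * p)) ≤ s * (s - 1 / 2 * (n ^ 2 * p)) :=
    mul_le_mul h3 h2 (by positivity) (le_trans (by positivity) h3)
  have h5 : n * (ε * p ^ 2 * n ^ 3) ≤ n * (2 * ∑ x, rdeg G x ^ 2 - p * n * s) := by nlinarith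
  exact le_of_mul_le_mul_left h5 hn

/-- Some vertex has many neighbors of large excess. -/
lemma exists_vertex_many {V : Type} [Fintype V] [Nonempty V] (G : SimpleGraph V) {p ε : ℝ}
    (hp : 0 < p) (hε : 0 < ε) (hd : ∀ x, rdeg G x ≤ 2 * p * Fintype.card V)
    (he : (1 / 2 + ε) * ((Fintype.card V : ℝ) ^ 2 * p) < ∑ x, rdeg G x) :
    ∃ w : V, ∃ Y : Finset V, (∀ y ∈ Y, G.Adj w y) ∧
      (∀ y ∈ Y, ε / 2 * p ^ 2 * (Fintype.card V : ℝ) ^ 2 ≤ excess G p y) ∧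
      ε / 8 * p * Fintype.card V ≤ Y.card := by
  have hsum := sum_excess_ge G hp hε he
  have hn : (0 : ℝ) < Fintype.card V := by exact_mod_cast Fintype.card_pos
  set n : ℝ := (Fintype.card V : ℝ) with hn_def
  have hub : ∀ y, excess G p y ≤ 4 * p * n * rdeg G y := by
    intro y
    have h1 : ∑ x, adjInd G y x * rdeg G x ≤ rdeg G y * (2 * p * n) := by
      rw [rdeg, Finset.sum_mul]
      exact Finset.sum_le_sum fun x _ => mul_le_mul_of_nonneg_left (hd x) (adjInd_nonneg _ _ _)
    have h2 := rdeg_nonneg G y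
    have h3 := hd y
    have h4 : 0 ≤ p * n * rdeg G y := by positivity
    have h5 : rdeg G y * rdeg G y ≤ rdeg G y * (2 * p * n) := mul_le_mul_of_nonneg_left h3 h2
    simp only [excess]
    nlinarith
  let B : Finset V := Finset.univ.filter fun y => ε / 2 * p ^ 2 * n ^ 2 ≤ excess G p y
  have hB : ∑ y, excess G p y ≤ ∑ y ∈ B, 4 * p * n * rdeg G y + n * (ε / 2 * p ^ 2 * n ^ 2) := by
    have : ∀ y, excess G p y ≤
        (if ε / 2 * p ^ 2 * n ^ 2 ≤ excess G p y then 4 * p * n * rdeg G y else 0)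
          + ε / 2 * p ^ 2 * n ^ 2 := by
      intro y
      split_ifs with h
      · have := hub y
        have : 0 ≤ ε / 2 * p ^ 2 * n ^ 2 := by positivity
        linarith [hub y]
      · linarith [not_le.1 h]
    refine (Finset.sum_le_sum fun y _ => this y).trans (le_of_eq ?_)
    rw [Finset.sum_add_distrib, ← Finset.sum_filter]
    simp [B, hn_def]
  have hdeg : ε / 8 * p * n ^ 2 ≤ ∑ y ∈ B, rdeg G y := by
    rw [← Finset.mul_sum] at hB
    have h1 : (4 * p * n) * (ε / 8 * p * n ^ 2) ≤ (4 * p * n) * ∑ y ∈ B, rdeg G y := by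
      nlinarith
    exact le_of_mul_le_mul_left h1 (by positivity)
  have hswap : ∑ y ∈ B, rdeg G y = ∑ w, ((B.filter fun y => G.Adj w y).card : ℝ) := by
    simp only [rdeg]
    rw [Finset.sum_comm]
    refine Finset.sum_congr rfl fun w _ => ?_
    simp [adjInd, G.adj_comm]
  rw [hswap] at hdeg
  obtain ⟨w, -, hw⟩ := Finset.exists_le_of_sum_le (s := (Finset.univ : Finset V))
    (f := fun _ => ε / 8 * p * n) (g := fun w => ((B.filter fun y => G.Adj w y).card : ℝ))
    Finset.univ_nonempty (by
      refine le_trans (le_of_eq ?_) hdeg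
      simp [← hn_def]
      ring)
  refine ⟨w, B.filter fun y => G.Adj w y, ?_, ?_, hw⟩
  · intro y hy
    exact (Finset.mem_filter.1 hy).2
  · intro y hy
    exact (Finset.mem_filter.1 (Finset.mem_filter.1 hy).1).2

/-- Refinement of a set of vertices to one where all degrees lie in a window of length
`p * n / L`, by the pigeonhole principle. -/
lemma exists_degree_class {V : Type} [Fintype V] [Nonempty V] (G : SimpleGraph V) {p : ℝ}
    (hp : 0 < p) (hd : ∀ x, rdeg G x ≤ 2 * p * Fintype.card V) (L : ℕ) (hL : 0 < L)
    (Y : Finset V) :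
    ∃ (Y' : Finset V) (D : ℝ), Y' ⊆ Y ∧ (Y.card : ℝ) ≤ (2 * L + 1) * Y'.card ∧
      ∀ y ∈ Y', D ≤ rdeg G y ∧ rdeg G y ≤ D + p * Fintype.card V / L := by
  have hn : (0 : ℝ) < Fintype.card V := by exact_mod_cast Fintype.card_pos
  set n : ℝ := (Fintype.card V : ℝ) with hn_def
  have hL' : (0 : ℝ) < L := by exact_mod_cast hL
  let k : V → ℕ := fun y => ⌊rdeg G y / (p * n / L)⌋₊
  have hk : ∀ y ∈ Y, k y ∈ Finset.range (2 * L + 1) := by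
    intro y _
    rw [Finset.mem_range, Nat.lt_succ_iff]
    apply Nat.floor_le_of_le
    rw [div_le_iff₀ (by positivity)]
    push_cast
    have := hd y
    have h2 : 2 * (L : ℝ) * (p * n / L) = 2 * p * n := by field_simp
    linarith
  obtain ⟨j, -, hj⟩ := Finset.exists_le_card_fiber_of_nsmul_le_card_of_maps_to
    (s := Y) (t := Finset.range (2 * L + 1)) (f := k) (b := (Y.card : ℝ) / (2 * L + 1)) hk
    ⟨0, by simp⟩ (by
      rw [Finset.card_range, nsmul_eq_mul]
      push_cast
      rw [mul_div_cancel₀ _ (by positivity)])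
  refine ⟨Y.filter fun y => k y = j, j * (p * n / L), Finset.filter_subset _ _, ?_, ?_⟩
  · rw [div_le_iff₀ (by positivity)] at hj
    linarith
  · intro y hy
    have hkj : k y = j := (Finset.mem_filter.1 hy).2
    have hw : 0 < p * n / L := by positivity
    have h1 := Nat.floor_le (a := rdeg G y / (p * n / L)) (div_nonneg (rdeg_nonneg G y) hw.le)
    have h2 := Nat.lt_floor_add_one (rdeg G y / (p * n / L))
    change ((k y : ℕ) : ℝ) ≤ _ at h1
    change _ < ((k y : ℕ) : ℝ) + 1 at h2
    rw [hkj, le_div_iff₀ hw] at h1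
    rw [hkj, div_lt_iff₀ hw] at h2
    exact ⟨h1, by linarith⟩

/-! ### Edges spanned by a joint neighborhood -/

/-- If all vertices of `Y` have large excess and nearly equal degrees, then the joint
neighborhood of `Y` spans many edges. With `c x` the number of neighbors of `x` in `Y`, the
weight `g x = c x / (p * |Y|)` is essentially bounded by `1` by upper regularity, so that its
truncation `h = min g 1`, supported on the neighborhood, has almost the same total mass. -/
lemma pairCount_nbhd_ge {V : Type} [Fintype V] [DecidableEq V] [Nonempty V]
    {G' G : SimpleGraph V} (hle : G' ≤ G) {p δ β ε η D : ℝ} (hp : 0 < p) (hδ : 0 < δ)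
    (hβ : 0 < β) (hη : 0 < η) (hreg : UpperRegular p δ β G) (hsmall : 2 * β * p ≤ δ)
    (Y S : Finset V) (hY : β * p * Fintype.card V ≤ Y.card)
    (hex : ∀ y ∈ Y, ε / 2 * p ^ 2 * (Fintype.card V : ℝ) ^ 2 ≤ excess G' p y)
    (hD : ∀ y ∈ Y, D ≤ rdeg G' y ∧ rdeg G' y ≤ D + η * p * Fintype.card V)
    (hS : ∀ y ∈ Y, ∀ x, G'.Adj y x → x ∈ S) :
    p * (Fintype.card V : ℝ) ^ 2 * (ε / 2 - 2 * η - 5 * δ) ≤ pairCount G' S S := by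
  obtain ⟨hdeg, hreg⟩ := hreg
  have hn : (0 : ℝ) < Fintype.card V := by exact_mod_cast Fintype.card_pos
  have hcardle : ∀ A : Finset V, (A.card : ℝ) ≤ Fintype.card V := by
    intro A
    exact_mod_cast Finset.card_le_univ A
  have hcompl : (S.card : ℝ) + (Sᶜ.card : ℝ) = Fintype.card V := by
    exact_mod_cast Finset.card_add_card_compl S
  set n : ℝ := (Fintype.card V : ℝ) with hn_def
  have hdeg' : ∀ x, rdeg G' x ≤ 2 * p * n := fun x => (rdeg_mono hle x).trans (hdeg x)
  set k : ℝ := (Y.card : ℝ) with hk_def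
  have hk : 0 < k := lt_of_lt_of_le (by positivity) hY
  have hpk : 0 < p * k := mul_pos hp hk
  let c : V → ℝ := fun x => ∑ y ∈ Y, adjInd G' y x
  have hc0 : ∀ x, 0 ≤ c x := fun x => Finset.sum_nonneg fun y _ => adjInd_nonneg _ _ _
  let g : V → ℝ := fun x => c x / (p * k)
  have hg0 : ∀ x, 0 ≤ g x := fun x => div_nonneg (hc0 x) hpk.le
  let h : V → ℝ := fun x => min (g x) 1
  have hh0 : ∀ x, 0 ≤ h x := fun x => le_min (hg0 x) zero_le_one
  have hh1 : ∀ x, h x ≤ 1 := fun x => min_le_right _ _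
  have hhg : ∀ x, h x ≤ g x := fun x => min_le_left _ _
  have hhS : ∀ x, x ∉ S → h x = 0 := by
    intro x hx
    have : c x = 0 := by
      refine Finset.sum_eq_zero fun y hy => ?_
      have : ¬ G'.Adj y x := fun hadj => hx (hS y hy x hadj)
      simp [adjInd, this]
    simp [h, g, this]
  -- sums against `g` are averages over `Y`
  have hgsum : ∀ f : V → ℝ, p * k * ∑ x, g x * f x = ∑ y ∈ Y, ∑ x, adjInd G' y x * f x := by
    intro f
    rw [Finset.sum_comm, Finset.mul_sum]
    refine Finset.sum_congr rfl fun x _ => ?_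
    rw [← Finset.sum_mul]
    change p * k * (c x / (p * k) * f x) = c x * f x
    field_simp
  -- the truncation costs at most `δ * n`
  have htrunc : ∑ x, (g x - h x) ≤ δ * n := by
    let A : Finset V := Finset.univ.filter fun x => 1 < g x
    have h1 : ∑ x, (g x - h x) = ∑ x ∈ A, (g x - 1) := by
      rw [Finset.sum_filter]
      refine Finset.sum_congr rfl fun x _ => ?_
      split_ifs with hx
      · simp [h, min_eq_right hx.le]
      · simp [h, min_eq_left (not_lt.1 hx)]
    have h2 : ∑ x ∈ A, c x ≤ p * (k * A.card) + δ * p * k * n := by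
      refine le_trans ?_ (hreg Y A hY)
      rw [pairCount, Finset.sum_comm]
      exact Finset.sum_le_sum fun x _ => Finset.sum_le_sum fun y _ => adjInd_mono hle _ _
    have h3 : p * k * ∑ x ∈ A, (g x - 1) = ∑ x ∈ A, c x - p * (k * A.card) := by
      rw [Finset.mul_sum]
      have : ∀ x ∈ A, p * k * (g x - 1) = c x - p * k := by
        intro x _
        change p * k * (c x / (p * k) - 1) = c x - p * k
        field_simp
      rw [Finset.sum_congr rfl this, Finset.sum_sub_distrib]
      simp
      ring
    rw [h1]
    have h4 : p * k * ∑ x ∈ A, (g x - 1) ≤ p * k * (δ * n) := by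
      rw [h3]
      linarith
    exact le_of_mul_le_mul_left h4 hpk
  set γ : ℝ := ∑ x, g x with hγ_def
  set σ : ℝ := ∑ x, h x with hσ_def
  have hγσ : γ - σ ≤ δ * n := by rwa [Finset.sum_sub_distrib] at htrunc
  have hσγ : σ ≤ γ := Finset.sum_le_sum fun x _ => hhg x
  have hσ0 : 0 ≤ σ := Finset.sum_nonneg fun x _ => hh0 x
  have hγdeg : p * k * γ = ∑ y ∈ Y, rdeg G' y := by
    have := hgsum fun _ => 1
    simpa [rdeg] using this
  have hγ2 : γ ≤ 2 * n := by
    have h1 : ∑ y ∈ Y, rdeg G' y ≤ k * (2 * p * n) := by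
      refine (Finset.sum_le_sum fun y _ => hdeg' y).trans (le_of_eq ?_)
      simp [hk_def]
    have h2 : p * k * γ ≤ p * k * (2 * n) := by linarith
    exact le_of_mul_le_mul_left h2 hpk
  have hDγ : D ≤ p * γ := by
    have h1 : k * D ≤ ∑ y ∈ Y, rdeg G' y := by
      refine le_trans (le_of_eq ?_) (Finset.sum_le_sum fun y hy => (hD y hy).1)
      simp [hk_def]
    have h2 : k * D ≤ k * (p * γ) := by linarith
    exact le_of_mul_le_mul_left h2 hk
  -- the degree sum weighted by `g`
  have hgd : p * (ε / 2 * n ^ 2 + γ * (n - γ) - η * n * γ) ≤ ∑ x, g x * rdeg G' x := by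
    have h1 : ∀ y ∈ Y, ε / 2 * p ^ 2 * n ^ 2 + (p * n - p * γ - η * p * n) * rdeg G' y ≤
        ∑ x, adjInd G' y x * rdeg G' x := by
      intro y hy
      have e1 := hex y hy
      have e2 := (hD y hy).2
      have e3 : rdeg G' y * rdeg G' y ≤ rdeg G' y * (p * γ + η * p * n) :=
        mul_le_mul_of_nonneg_left (by linarith) (rdeg_nonneg _ _)
      simp only [excess] at e1
      nlinarith
    have h2 := Finset.sum_le_sum h1
    rw [← hgsum, Finset.sum_add_distrib, Finset.sum_const, nsmul_eq_mul, ← hk_def,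
      ← Finset.mul_sum, ← hγdeg] at h2
    have h3 : p * k * (p * (ε / 2 * n ^ 2 + γ * (n - γ) - η * n * γ)) ≤
        p * k * ∑ x, g x * rdeg G' x := by
      refine le_trans (le_of_eq ?_) h2
      ring
    exact le_of_mul_le_mul_left h3 hpk
  have hhd : ∑ x, g x * rdeg G' x - 2 * p * n * (δ * n) ≤ ∑ x, h x * rdeg G' x := by
    have h1 : ∑ x, (g x - h x) * rdeg G' x ≤ ∑ x, (g x - h x) * (2 * p * n) :=
      Finset.sum_le_sum fun x _ =>
        mul_le_mul_of_nonneg_left (hdeg' x) (sub_nonneg.2 (hhg x))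
    rw [← Finset.sum_mul] at h1
    simp only [sub_mul, Finset.sum_sub_distrib] at h1
    have h2 : (γ - σ) * (2 * p * n) ≤ (δ * n) * (2 * p * n) :=
      mul_le_mul_of_nonneg_right hγσ (by positivity)
    linarith
  -- few edges leave the support of `h`
  set T : Finset V := Sᶜ with hT_def
  have hhT : ∑ x, h x * ∑ a ∈ T, adjInd G' x a ≤ p * σ * T.card + δ * p * n ^ 2 := by
    let dT : V → ℝ := fun x => ∑ a ∈ T, adjInd G x a
    let P : Finset V := Finset.univ.filter fun x => p * T.card < dT x
    have h1 : ∑ x, h x * ∑ a ∈ T, adjInd G' x a ≤ ∑ x, h x * dT x :=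
      Finset.sum_le_sum fun x _ => mul_le_mul_of_nonneg_left
        (Finset.sum_le_sum fun a _ => adjInd_mono hle _ _) (hh0 x)
    have h2 : ∑ x, h x * (dT x - p * T.card) ≤ ∑ x ∈ P, (dT x - p * T.card) := by
      rw [Finset.sum_filter]
      refine Finset.sum_le_sum fun x _ => ?_
      split_ifs with hx
      · exact mul_le_of_le_one_left (by linarith) (hh1 x)
      · exact mul_nonpos_of_nonneg_of_nonpos (hh0 x) (by linarith [not_lt.1 hx])
    have h3 : ∑ x ∈ P, (dT x - p * T.card) = pairCount G P T - p * (P.card * T.card) := by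
      rw [Finset.sum_sub_distrib, pairCount]
      simp [dT]
      ring
    have h4 : pairCount G P T - p * (P.card * T.card) ≤ δ * p * n ^ 2 := by
      by_cases hP : β * p * n ≤ P.card
      · have e1 := hreg P T hP
        have e2 : δ * p * n * P.card ≤ δ * p * n * n :=
          mul_le_mul_of_nonneg_left (hcardle P) (by positivity)
        nlinarith
      · have e1 := pairCount_le_mul G P T hdeg
        have e2 : (P.card : ℝ) * (2 * p * n) ≤ (β * p * n) * (2 * p * n) :=
          mul_le_mul_of_nonneg_right (not_le.1 hP).le (by positivity)
        have e3 : (2 * β * p) * (p * n ^ 2) ≤ δ * (p * n ^ 2) :=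
          mul_le_mul_of_nonneg_right hsmall (by positivity)
        have e4 : (0 : ℝ) ≤ p * (P.card * T.card) := by positivity
        nlinarith
    have h5 : ∑ x, h x * (dT x - p * T.card) = ∑ x, h x * dT x - p * σ * T.card := by
      simp only [mul_sub, Finset.sum_sub_distrib, ← Finset.sum_mul]
      ring
    linarith
  have hσS : σ ≤ S.card := by
    have : σ ≤ ∑ x, (if x ∈ S then (1 : ℝ) else 0) := by
      refine Finset.sum_le_sum fun x _ => ?_
      split_ifs with hx
      · exact hh1 x
      · exact (hhS x hx).le
    simpa using this
  have hσT : σ * T.card ≤ γ * (n - γ + δ * n) := by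
    have e0 : (0 : ℝ) ≤ T.card := Nat.cast_nonneg _
    exact mul_le_mul hσγ (by linarith) e0 (hσ0.trans hσγ)
  have hSS : ∑ x, h x * rdeg G' x - ∑ x, h x * ∑ a ∈ T, adjInd G' x a ≤ pairCount G' S S := by
    rw [← Finset.sum_sub_distrib, pairCount, ← Finset.sum_filter_add_sum_filter_not
      Finset.univ (fun x => x ∈ S)]
    have hz : ∑ x with x ∉ S, (h x * rdeg G' x - h x * ∑ a ∈ T, adjInd G' x a) = 0 := by
      refine Finset.sum_eq_zero fun x hx => ?_
      simp [hhS x (Finset.mem_filter.1 hx).2]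
    rw [hz, add_zero, Finset.filter_univ_mem]
    refine Finset.sum_le_sum fun x _ => ?_
    have e1 : rdeg G' x = ∑ a ∈ S, adjInd G' x a + ∑ a ∈ T, adjInd G' x a :=
      (Finset.sum_add_sum_compl S _).symm
    rw [e1, ← mul_sub, add_sub_cancel_right]
    exact mul_le_of_le_one_left (Finset.sum_nonneg fun _ _ => adjInd_nonneg _ _ _) (hh1 x)
  have e1 : p * (σ * T.card) ≤ p * (γ * (n - γ + δ * n)) := mul_le_mul_of_nonneg_left hσT hp.le
  have e2 : p * n * (η + δ) * γ ≤ p * n * (η + δ) * (2 * n) :=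
    mul_le_mul_of_nonneg_left hγ2 (by positivity)
  linarith

/-- The deterministic part of the argument: upper regularity of the host graph suffices. -/
lemma exists_special_of_regular {V : Type} [Fintype V] [DecidableEq V] [Nonempty V]
    {G' G : SimpleGraph V} (hle : G' ≤ G) {p ε : ℝ} (hp : 0 < p) (hε : 0 < ε) (hε1 : ε ≤ 1)
    (L : ℕ)
    (hL : 16 / ε ≤ L) (hreg : UpperRegular p (ε / 40) (ε / 8 / (2 * L + 1)) G)
    (hsmall : 8 * p + 4 / Fintype.card V ≤ ε / 8)
    (he : (1 / 2 + ε) * ((Fintype.card V : ℝ) ^ 2 * p / 2) < G'.edgeSet.ncard) :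
    ∃ w : V, ε / 16 * ((Fintype.card V : ℝ) ^ 2 * p) ≤ edgesInside G' (secondNbhd G' w) := by
  have hn : (0 : ℝ) < Fintype.card V := by exact_mod_cast Fintype.card_pos
  have hdeg' : ∀ x, rdeg G' x ≤ 2 * p * Fintype.card V :=
    fun x => (rdeg_mono hle x).trans (hreg.1 x)
  have hL0 : (0 : ℝ) < L := lt_of_lt_of_le (by positivity) hL
  have hLpos : 0 < L := by exact_mod_cast hL0
  obtain ⟨w, Y₀, hadj, hex, hcard⟩ := exists_vertex_many G' hp hε hdeg' (by
    rw [sum_rdeg_eq]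
    linarith)
  obtain ⟨Y, D, hsub, hYcard, hD⟩ := exists_degree_class G' hp hdeg' L hLpos Y₀
  let S : Finset V := Finset.univ.filter fun x => ∃ y ∈ Y, G'.Adj y x
  have hcount : p * (Fintype.card V : ℝ) ^ 2 * (ε / 2 - 2 * (1 / L) - 5 * (ε / 40)) ≤
      pairCount G' S S := by
    refine pairCount_nbhd_ge hle (β := ε / 8 / (2 * L + 1)) (D := D) hp (by positivity)
      (by positivity) (by positivity) hreg ?_ Y S ?_ (fun y hy => hex y (hsub hy)) ?_ ?_
    · have h1 : ε / 8 / (2 * L + 1) ≤ ε / 8 := div_le_self (by positivity) (by linarith)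
      have h2 : 0 < 4 / (Fintype.card V : ℝ) := by positivity
      have h3 : p ≤ ε / 64 := by linarith
      have h4 : ε / 8 / (2 * L + 1) * p ≤ ε / 8 * (ε / 64) :=
        mul_le_mul h1 h3 hp.le (by positivity)
      nlinarith
    · rw [div_mul_eq_mul_div, div_mul_eq_mul_div, div_le_iff₀ (by positivity)]
      linarith
    · intro y hy
      have := hD y hy
      rw [one_div_mul_eq_div, div_mul_eq_mul_div]
      exact this
    · intro y hy x hx
      exact Finset.mem_filter.2 ⟨Finset.mem_univ _, y, hy, hx⟩
  set n : ℝ := (Fintype.card V : ℝ) with hn_def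
  let R : Finset V := insert w (G'.neighborFinset w)
  have hR : (R.card : ℝ) ≤ 2 * p * n + 1 := by
    have h1 : R.card ≤ (G'.neighborFinset w).card + 1 := Finset.card_insert_le _ _
    have h2 : rdeg G' w = ((G'.neighborFinset w).card : ℝ) := by
      rw [SimpleGraph.neighborFinset_eq_filter]
      simp [rdeg, adjInd]
    have h3 := hdeg' w
    have h4 : (R.card : ℝ) ≤ (G'.neighborFinset w).card + 1 := by exact_mod_cast h1
    linarith
  have h1 := pairCount_sdiff G' S R hdeg'
  have h2 : pairCount G' (S \ R) (S \ R) ≤ 2 * (edgesInside G' (secondNbhd G' w) : ℝ) := by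
    refine pairCount_self_le G' _ _ fun x hx => ?_
    rw [Finset.mem_coe, Finset.mem_sdiff] at hx
    obtain ⟨y, hy, hyx⟩ := (Finset.mem_filter.1 hx.1).2
    have hx2 : x ≠ w ∧ ¬ G'.Adj w x := by
      have := hx.2
      simpa [R] using this
    exact dist_eq_two (hadj y (hsub hy)) hyx hx2.1 hx2.2
  refine ⟨w, ?_⟩
  have h3 : (R.card : ℝ) * (2 * p * n) ≤ (2 * p * n + 1) * (2 * p * n) :=
    mul_le_mul_of_nonneg_right hR (by positivity)
  have h4 : 2 * ((2 * p * n + 1) * (2 * p * n)) = p * n ^ 2 * (8 * p + 4 / n) := by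
    field_simp
    ring
  have h5 : p * n ^ 2 * (8 * p + 4 / n) ≤ p * n ^ 2 * (ε / 8) :=
    mul_le_mul_of_nonneg_left hsmall (by positivity)
  have h6 : 1 / (L : ℝ) ≤ ε / 16 := by
    rw [div_le_iff₀ hε] at hL
    rw [div_le_iff₀ hL0]
    linarith
  have h7 : p * n ^ 2 * (ε / 8 + ε / 8) ≤
      p * n ^ 2 * (ε / 2 - 2 * (1 / L) - 5 * (ε / 40)) :=
    mul_le_mul_of_nonneg_left (by linarith) (by positivity)
  linarith

/-! ### Upper regularity of the random graph and conclusion -/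

/-- Union bound: `4 ^ n` pairs of sets, each with deviation parameter `θ = δ / 4`, and `n`
single vertices, each with `θ = 1 / 4`. -/
lemma gnpProb_not_upperRegular_le (V : Type) [Fintype V] [DecidableEq V] {p δ β : ℝ}
    (h0 : 0 ≤ p) (h1 : p ≤ 1) (hδ0 : 0 ≤ δ) (hδ1 : δ ≤ 1) :
    gnpProb V p (fun G => ¬ UpperRegular p δ β G) ≤
      Fintype.card V * Real.exp (-(p * Fintype.card V / 8)) +
      4 ^ Fintype.card V *
        Real.exp (-(δ ^ 2 * β / 8 * (p * Fintype.card V) ^ 2)) := by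
  set n : ℝ := (Fintype.card V : ℝ) with hn_def
  have hn : 0 ≤ n := Nat.cast_nonneg _
  let Q : Finset (Finset V × Finset V) := Finset.univ.filter fun q => β * p * n ≤ q.1.card
  have hmono : gnpProb V p (fun G => ¬ UpperRegular p δ β G) ≤
      gnpProb V p (fun G =>
        (∃ x ∈ (Finset.univ : Finset V),
          p * (({x} : Finset V).card * (Finset.univ : Finset V).card) + p * n <
            pairCount G {x} Finset.univ) ∨
        ∃ q ∈ Q, p * (q.1.card * q.2.card) + δ * p * q.1.card * n < pairCount G q.1 q.2) := by
    refine gnpProb_mono V h0 h1 fun G hG => ?_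
    by_contra hcon
    push Not at hcon
    refine hG ⟨fun x => ?_, fun Y A hY => ?_⟩
    · have := hcon.1 x (Finset.mem_univ x)
      simp only [pairCount, Finset.sum_singleton, Finset.card_singleton, Finset.card_univ,
        Nat.cast_one, one_mul] at this
      change rdeg G x ≤ p * n + p * n at this
      change rdeg G x ≤ 2 * p * n
      linarith
    · exact hcon.2 (Y, A) (Finset.mem_filter.2 ⟨Finset.mem_univ _, hY⟩)
  refine hmono.trans ((gnpProb_or_le V h0 h1 _ _).trans (add_le_add ?_ ?_))
  · refine (gnpProb_exists_le V h0 h1 Finset.univ _).trans ?_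
    refine (Finset.sum_le_sum fun x _ => gnpProb_pairCount_le V h0 h1 (θ := 1 / 4)
      (by norm_num) (by norm_num) {x} Finset.univ (p * n)).trans (le_of_eq ?_)
    simp only [Finset.card_singleton, Finset.card_univ, Finset.sum_const, nsmul_eq_mul,
      Nat.cast_one, one_mul, ← hn_def]
    congr 2
    ring
  · refine (gnpProb_exists_le V h0 h1 Q _).trans ?_
    have hterm : ∀ q ∈ Q, gnpProb V p (fun G =>
        p * (q.1.card * q.2.card) + δ * p * q.1.card * n < pairCount G q.1 q.2) ≤
          Real.exp (-(δ ^ 2 * β / 8 * (p * n) ^ 2)) := by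
      intro q hq
      have hY : β * p * n ≤ q.1.card := (Finset.mem_filter.1 hq).2
      have hA : (q.2.card : ℝ) ≤ n := by
        rw [hn_def]
        exact_mod_cast Finset.card_le_univ q.2
      refine (gnpProb_pairCount_le V h0 h1 (θ := δ / 4) (by linarith) (by linarith)
        q.1 q.2 _).trans ?_
      rw [Real.exp_le_exp]
      have e1 : 2 * p * (δ / 4) ^ 2 * q.1.card * q.2.card ≤
          2 * p * (δ / 4) ^ 2 * q.1.card * n :=
        mul_le_mul_of_nonneg_left hA (by positivity)
      have e2 : δ ^ 2 / 8 * (p * n) * (β * p * n) ≤ δ ^ 2 / 8 * (p * n) * q.1.card :=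
        mul_le_mul_of_nonneg_left hY (by positivity)
      linarith
    refine (Finset.sum_le_sum hterm).trans ?_
    rw [Finset.sum_const, nsmul_eq_mul]
    refine mul_le_mul_of_nonneg_right ?_ (Real.exp_pos _).le
    have hQ : Q.card ≤ 4 ^ Fintype.card V := by
      refine (Finset.card_le_univ Q).trans (le_of_eq ?_)
      rw [Fintype.card_prod, Fintype.card_finset, ← mul_pow]
      norm_num
    exact_mod_cast hQ

lemma tendsto_nat_mul_exp_neg_sqrt :
    Tendsto (fun n : ℕ => (n : ℝ) * Real.exp (-(√(n : ℝ) / 8))) atTop (𝓝 0) := by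
  have h1 := (Real.tendsto_pow_mul_exp_neg_atTop_nhds_zero 2).const_mul 64
  have h2 : Tendsto (fun n : ℕ => √(n : ℝ) / 8) atTop atTop :=
    (Real.tendsto_sqrt_atTop.comp tendsto_natCast_atTop_atTop).atTop_div_const (by norm_num)
  have h3 := h1.comp h2
  rw [mul_zero] at h3
  refine h3.congr fun n => ?_
  simp only [Function.comp]
  rw [div_pow, Real.sq_sqrt (Nat.cast_nonneg n)]
  ring

lemma tendsto_four_pow_mul_exp :
    Tendsto (fun n : ℕ => (4 : ℝ) ^ n * Real.exp (-(2 * (n : ℝ)))) atTop (𝓝 0) := by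
  have h1 : (4 : ℝ) * Real.exp (-2) < 1 := by
    rw [Real.exp_neg, ← div_eq_mul_inv, div_lt_one (Real.exp_pos _)]
    have h2 : Real.exp 2 = Real.exp 1 * Real.exp 1 := by
      rw [← Real.exp_add]
      norm_num
    have := Real.exp_one_gt_d9
    rw [h2]
    nlinarith
  refine (tendsto_pow_atTop_nhds_zero_of_lt_one (by positivity) h1).congr fun n => ?_
  rw [mul_pow, ← Real.exp_nat_mul]
  congr 2
  ring

/-- For every ε ∈ (0, 1/16) there is C₀ such that for p = C·n^(-1/2) with C ≥ C₀, a.a.s.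
every subgraph G' of G(n,p) with more than (1/2 + ε)·n²p/2 edges contains a vertex w with
at least (ε/16)·n²p edges inside its second neighborhood. -/
theorem special_vertex (ε : ℝ) (hε : ε ∈ Set.Ioo (0 : ℝ) (1/16)) :
    ∃ C₀ : ℝ, ∀ C : ℝ, C₀ ≤ C →
      Filter.Tendsto
        (fun n : ℕ =>
          gnpProb (Fin n) (C * (n : ℝ) ^ (-(1/2) : ℝ)) (fun G =>
            ∀ G' : SimpleGraph (Fin n), G' ≤ G →
              (1/2 + ε) * ((n : ℝ)^2 * (C * (n : ℝ) ^ (-(1/2) : ℝ)) / 2) <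
                (G'.edgeSet.ncard : ℝ) →
              ∃ w : Fin n,
                ε / 16 * ((n : ℝ)^2 * (C * (n : ℝ) ^ (-(1/2) : ℝ))) ≤
                  (edgesInside G' (secondNbhd G' w) : ℝ)))
        Filter.atTop (nhds 1) := by
  obtain ⟨hε0, hε1⟩ := hε
  obtain ⟨L, hL⟩ := exists_nat_ge (16 / ε)
  have hβ : 0 < ε / 8 / (2 * (L : ℝ) + 1) := by positivity
  set β : ℝ := ε / 8 / (2 * (L : ℝ) + 1) with hβ_def
  set δ : ℝ := ε / 40 with hδ_def
  have hδ : 0 < δ := by positivity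
  -- `C₀` makes the exponent in the union bound over pairs of sets at least `2 * n`
  refine ⟨max 1 (16 / (δ ^ 2 * β)), fun C hC => ?_⟩
  have hC1 : 1 ≤ C := (le_max_left _ _).trans hC
  have hC2 : 16 / (δ ^ 2 * β) ≤ C := (le_max_right _ _).trans hC
  have hCpos : 0 < C := by linarith
  have hCsq : 2 ≤ δ ^ 2 * β / 8 * C ^ 2 := by
    rw [div_le_iff₀ (by positivity)] at hC2
    have : C * (δ ^ 2 * β) ≤ C ^ 2 * (δ ^ 2 * β) :=
      mul_le_mul_of_nonneg_right (by nlinarith) (by positivity)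
    linarith
  have hp_tendsto : Tendsto (fun n : ℕ => C * (n : ℝ) ^ (-(1/2) : ℝ)) atTop (𝓝 0) := by
    have := ((tendsto_rpow_neg_atTop (y := (1/2 : ℝ)) (by norm_num)).comp
      tendsto_natCast_atTop_atTop).const_mul C
    simpa using this
  have hinv : Tendsto (fun n : ℕ => 4 / (n : ℝ)) atTop (𝓝 0) :=
    tendsto_const_div_atTop_nhds_zero_nat 4
  have hsum := (hp_tendsto.const_mul 8).add hinv
  rw [mul_zero, add_zero] at hsum
  have hev1 := hp_tendsto.eventually_le_const (u := 1) (by norm_num)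
  have hev2 := hsum.eventually_le_const (u := ε / 8) (by positivity)
  have hlow : Tendsto (fun n : ℕ => 1 - ((n : ℝ) * Real.exp (-(√(n : ℝ) / 8)) +
      (4 : ℝ) ^ n * Real.exp (-(2 * (n : ℝ))))) atTop (𝓝 1) := by
    have := (tendsto_nat_mul_exp_neg_sqrt.add tendsto_four_pow_mul_exp).const_sub 1
    simpa using this
  refine tendsto_of_tendsto_of_tendsto_of_le_of_le' hlow tendsto_const_nhds ?_ ?_
  · filter_upwards [hev1, hev2, eventually_gt_atTop 0] with n hp1 hsmall hnpos
    have hn : (0 : ℝ) < n := by exact_mod_cast hnpos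
    have : Nonempty (Fin n) := ⟨⟨0, hnpos⟩⟩
    have hpn : C * (n : ℝ) ^ (-(1/2) : ℝ) * n = C * √(n : ℝ) := by
      rw [Real.rpow_neg hn.le, ← Real.sqrt_eq_rpow, mul_assoc]
      congr 1
      rw [inv_mul_eq_div, Real.div_sqrt]
    set p : ℝ := C * (n : ℝ) ^ (-(1/2) : ℝ) with hp_def
    have hp0 : 0 < p := by positivity
    have hbad := gnpProb_not_upperRegular_le (Fin n) (p := p) (δ := δ) (β := β) hp0.le hp1
      hδ.le (by linarith)
    rw [Fintype.card_fin, hpn] at hbad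
    have hgood := gnpProb_mono (Fin n) (p := p) hp0.le hp1
      (P := fun G => UpperRegular p δ β G)
      (Q := fun G => ∀ G' : SimpleGraph (Fin n), G' ≤ G →
              (1/2 + ε) * ((n : ℝ)^2 * p / 2) < (G'.edgeSet.ncard : ℝ) →
              ∃ w : Fin n, ε / 16 * ((n : ℝ)^2 * p) ≤
                  (edgesInside G' (secondNbhd G' w) : ℝ)) (by
        intro G hG G' hle hedges
        have := exists_special_of_regular hle hp0 hε0 (by linarith) L hL hG
          (by rwa [Fintype.card_fin]) (by rwa [Fintype.card_fin])
        rwa [Fintype.card_fin] at this)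
    have hcompl := gnpProb_add_not (Fin n) p (fun G => UpperRegular p δ β G)
    have hb1 : (n : ℝ) * Real.exp (-(C * √(n : ℝ) / 8)) ≤
        (n : ℝ) * Real.exp (-(√(n : ℝ) / 8)) := by
      refine mul_le_mul_of_nonneg_left (Real.exp_le_exp.2 ?_) hn.le
      have := le_mul_of_one_le_left (Real.sqrt_nonneg (n : ℝ)) hC1
      linarith
    have hb2 : (4 : ℝ) ^ n * Real.exp (-(δ ^ 2 * β / 8 * (C * √(n : ℝ)) ^ 2)) ≤
        (4 : ℝ) ^ n * Real.exp (-(2 * (n : ℝ))) := by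
      refine mul_le_mul_of_nonneg_left (Real.exp_le_exp.2 ?_) (by positivity)
      rw [mul_pow, Real.sq_sqrt hn.le]
      have := mul_le_mul_of_nonneg_right hCsq hn.le
      linarith
    linarith
  · filter_upwards [hev1] with n hp1
    have hp0 : 0 ≤ C * (n : ℝ) ^ (-(1/2) : ℝ) := by positivity
    have h1 := gnpProb_add_not (Fin n) (C * (n : ℝ) ^ (-(1/2) : ℝ)) (fun G =>
            ∀ G' : SimpleGraph (Fin n), G' ≤ G →
              (1/2 + ε) * ((n : ℝ)^2 * (C * (n : ℝ) ^ (-(1/2) : ℝ)) / 2) <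
                (G'.edgeSet.ncard : ℝ) →
              ∃ w : Fin n,
                ε / 16 * ((n : ℝ)^2 * (C * (n : ℝ) ^ (-(1/2) : ℝ))) ≤
                  (edgesInside G' (secondNbhd G' w) : ℝ))
    have h2 := gnpProb_nonneg (Fin n) hp0 hp1 (fun G => ¬ (
            ∀ G' : SimpleGraph (Fin n), G' ≤ G →
              (1/2 + ε) * ((n : ℝ)^2 * (C * (n : ℝ) ^ (-(1/2) : ℝ)) / 2) <
                (G'.edgeSet.ncard : ℝ) →
              ∃ w : Fin n,
                ε / 16 * ((n : ℝ)^2 * (C * (n : ℝ) ^ (-(1/2) : ℝ))) ≤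
                  (edgesInside G' (secondNbhd G' w) : ℝ)))
    linarith
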